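/- If U is subharmonic, non-negative, and continuous on the closed unit disk, and p ≥ 2, then ∫_{-1}^{1} U(x)^p dx ≤ ∫₀^{2π} U(e^{iθ})^p dθ. -/

import Mathlib

open Complex MeasureTheory Real

/-- A function is subharmonic on a set if it is upper semicontinuous there and satisfies the
sub-mean value inequality on every circle whose closed disk lies in the set. -/
def SubharmonicOn (u : ℂ → ℝ) (s : Set ℂ) : Prop :=
  UpperSemicontinuousOn u s ∧
    ∀ z ∈ s, ∀ ρ : ℝ, 0 < ρ → Metric.closedBall z ρ ⊆ s →
      u z ≤ (2 * π)⁻¹ * ∫ θ in (0:ℝ)..(2 * π), u (z + (ρ : ℂ) * Complex.exp (θ * Complex.I))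

/-!
Since `p / 2 ≥ 1`, Jensen's inequality makes `W = U ^ (p / 2)` subharmonic, so the exponent `2` is
enough. Approximating `W` on the circle by real parts of polynomials and applying the maximum
principle bounds `W` on the disk by `Re P`, with `Re P < W + ε` on the circle. For holomorphic `f`,
Cauchy's theorem on the upper half disk, applied to `f z * conj (f (conj z))`, gives the
Fejér–Riesz inequality `∫_{-1}^{1} |f|² ≤ ½ ∫_{|z| = 1} |f|²`. The mean value property of `f ^ 2`
gives `∫_{|z| = 1} |f|² = 2 ∫_{|z| = 1} (Re f)² - 2π Re (f(0)²)`, and an imaginary constant can be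
subtracted from `f` to make `f 0` real.
-/

section Analysis

open Set

variable {E : Type*} [NormedAddCommGroup E] [NormedSpace ℝ E]

theorem continuousOn_intervalIntegral_of_continuousOn {X : Type*} [TopologicalSpace X]
    {μ : Measure ℝ} [IsLocallyFiniteMeasure μ] [NullSingletonClass μ] {f : X → ℝ → E} {s : Set X}
    {a b : ℝ} (hf : ContinuousOn f.uncurry (s ×ˢ uIcc a b)) :
    ContinuousOn (fun x ↦ ∫ t in a..b, f x t ∂μ) s := by
  have hab : min a b ≤ max a b := min_le_max
  have hclamp : ∀ x, ∫ t in a..b, f x t ∂μ = ∫ t in a..b, f x (projIcc _ _ hab t) ∂μ := fun x ↦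
    intervalIntegral.integral_congr fun t ht ↦ by simp only [projIcc_of_mem hab ht]
  simp_rw [hclamp]
  rw [continuousOn_iff_continuous_domRestrict]
  refine intervalIntegral.continuous_parametric_intervalIntegral_of_continuous'
    (f := fun (x : s) t ↦ f x (projIcc _ _ hab t)) (hf.comp_continuous
      (f := fun p : s × ℝ ↦ ((p.1 : X), (projIcc _ _ hab p.2 : ℝ))) ?_ fun p ↦ ?_) a b
  · exact (continuous_subtype_val.comp continuous_fst).prodMk
      (continuous_subtype_val.comp (continuous_projIcc.comp continuous_snd))
  · exact ⟨p.1.2, (projIcc _ _ hab p.2).2⟩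

variable {c : ℂ} {R : ℝ}

theorem continuous_comp_circleMap {X : Type*} [TopologicalSpace X] {u : ℂ → X}
    (hu : ContinuousOn u (Metric.sphere c |R|)) : Continuous fun θ ↦ u (circleMap c R θ) :=
  hu.comp_continuous (continuous_circleMap c R) (circleMap_mem_sphere' c R)

theorem circleAverage_mem_epigraph_of_convexOn [CompleteSpace E] {u : ℂ → E} {t : Set E} {φ : E → ℝ}
    (hφ : ConvexOn ℝ t φ) (hφc : ContinuousOn φ t) (ht : IsClosed t)
    (hut : MapsTo u (Metric.sphere c |R|) t) (hu : CircleIntegrable u c R)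
    (hφu : CircleIntegrable (fun z ↦ φ (u z)) c R) :
    (circleAverage u c R, circleAverage (fun z ↦ φ (u z)) c R) ∈
      {q : E × ℝ | q.1 ∈ t ∧ φ q.1 ≤ q.2} := by
  simp only [circleAverage_eq_intervalAverage]
  refine hφ.set_average_mem_epigraph hφc ht ?_ ?_
    (Filter.Eventually.of_forall fun θ ↦ hut (circleMap_mem_sphere' c R θ))
    (intervalIntegrable_iff.1 hu) (intervalIntegrable_iff.1 hφu)
  · simp [uIoc_of_le two_pi_pos.le, pi_pos]
  · simp [uIoc_of_le two_pi_pos.le, ENNReal.mul_eq_top]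

theorem circleAverage_lt_of_continuousOn_of_le_of_exists_lt {u : ℂ → ℝ} {M : ℝ}
    (hu : ContinuousOn u (Metric.sphere c |R|)) (hle : ∀ z ∈ Metric.sphere c |R|, u z ≤ M)
    (hlt : ∃ z ∈ Metric.sphere c |R|, u z < M) : circleAverage u c R < M := by
  obtain ⟨z, hz, hzM⟩ := hlt
  obtain ⟨θ, hθ, rfl⟩ : z ∈ circleMap c R '' Ioc 0 (2 * π) := by rwa [image_circleMap_Ioc]
  have hint := intervalIntegral.integral_lt_integral_of_continuousOn_of_le_of_exists_lt
    two_pi_pos (continuous_comp_circleMap hu).continuousOn (continuousOn_const (c := M))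
    (fun θ _ ↦ hle _ (circleMap_mem_sphere' c R θ)) ⟨θ, Ioc_subset_Icc_self hθ, hzM⟩
  rw [intervalIntegral.integral_const, smul_eq_mul, sub_zero] at hint
  rwa [circleAverage_def, smul_eq_mul, inv_mul_lt_iff₀ two_pi_pos]

end Analysis

namespace SubharmonicOn

open Set Metric InnerProductSpace

variable {u : ℂ → ℝ} {s : Set ℂ}

theorem le_circleAverage (hu : SubharmonicOn u s) {z : ℂ} {ρ : ℝ} (hρ : 0 < ρ)
    (hs : closedBall z ρ ⊆ s) : u z ≤ circleAverage u z ρ :=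
  hu.2 z (hs (mem_closedBall_self hρ.le)) ρ hρ hs

theorem of_le_circleAverage (hc : ContinuousOn u s)
    (hu : ∀ z ρ, 0 < ρ → closedBall z ρ ⊆ s → u z ≤ circleAverage u z ρ) : SubharmonicOn u s :=
  ⟨hc.upperSemicontinuousOn, fun z _ ρ hρ hs ↦ hu z ρ hρ hs⟩

theorem convexOn_comp {t : Set ℝ} {φ : ℝ → ℝ} (hu : SubharmonicOn u s) (hc : ContinuousOn u s)
    (hφ : ConvexOn ℝ t φ) (hφmono : MonotoneOn φ t) (hφc : ContinuousOn φ t) (ht : IsClosed t)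
    (hut : MapsTo u s t) : SubharmonicOn (fun z ↦ φ (u z)) s := by
  have hφu : ContinuousOn (fun z ↦ φ (u z)) s := hφc.comp hc hut
  refine of_le_circleAverage hφu fun z ρ hρ hs ↦ ?_
  have hsphere : sphere z |ρ| ⊆ s := by
    rw [abs_of_pos hρ]; exact sphere_subset_closedBall.trans hs
  obtain ⟨hmem, hle⟩ := circleAverage_mem_epigraph_of_convexOn hφ hφc ht (hut.mono_left hsphere)
    (hc.mono hsphere).circleIntegrable' (hφu.mono hsphere).circleIntegrable'
  exact (hφmono (hut (hs (mem_closedBall_self hρ.le))) hmem (hu.le_circleAverage hρ hs)).trans hle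

theorem rpow {q : ℝ} (hu : SubharmonicOn u s) (hc : ContinuousOn u s) (h0 : ∀ z ∈ s, 0 ≤ u z)
    (hq : 1 ≤ q) : SubharmonicOn (fun z ↦ u z ^ q) s :=
  have hq0 : 0 ≤ q := zero_le_one.trans hq
  hu.convexOn_comp hc (convexOn_rpow hq) (monotoneOn_rpow_Ici_of_exponent_nonneg hq0)
    (Real.continuous_rpow_const hq0).continuousOn isClosed_Ici h0

theorem sub_harmonicOnNhd {h : ℂ → ℝ} (hu : SubharmonicOn u s) (hc : ContinuousOn u s)
    (hh : HarmonicOnNhd h s) : SubharmonicOn (fun z ↦ u z - h z) s := by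
  refine of_le_circleAverage (hc.sub hh.continuousOn) fun z ρ hρ hs ↦ ?_
  have hball : closedBall z |ρ| ⊆ s := by rwa [abs_of_pos hρ]
  have hsphere : sphere z |ρ| ⊆ s := sphere_subset_closedBall.trans hball
  rw [circleAverage_fun_sub (hc.mono hsphere).circleIntegrable'
    (hh.continuousOn.mono hsphere).circleIntegrable', (hh.mono hball).circleAverage_eq]
  linarith [hu.le_circleAverage hρ hs]

theorem le_of_forall_frontier_le (hu : SubharmonicOn u s) (hs : IsOpen s)
    (hb : Bornology.IsBounded s) (hc : ContinuousOn u (closure s)) {M : ℝ}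
    (hM : ∀ z ∈ frontier s, u z ≤ M) {z : ℂ} (hz : z ∈ closure s) : u z ≤ M := by
  have hK : IsCompact (closure s) := hb.isCompact_closure
  obtain ⟨a, ha, hmax⟩ := hK.exists_isMaxOn ⟨z, hz⟩ hc
  have hS : IsCompact (closure s ∩ u ⁻¹' Ici (u a)) :=
    hK.of_isClosed_subset (hc.preimage_isClosed_of_isClosed isClosed_closure isClosed_Ici)
      inter_subset_left
  -- A maximum point with largest real part cannot be interior: circles around it leave `S`.
  obtain ⟨b, ⟨hb, hab⟩, hright⟩ :=
    hS.exists_isMaxOn ⟨a, ha, le_refl (u a)⟩ continuous_re.continuousOn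
  suffices hbs : b ∉ s from
    (hmax hz).trans (hab.trans (hM b ⟨hb, by rwa [hs.interior_eq]⟩))
  intro hbs
  obtain ⟨ρ, hρ, hball⟩ := nhds_basis_closedBall.mem_iff.1 (hs.mem_nhds hbs)
  have hsphere : sphere b |ρ| ⊆ closure s := by
    rw [abs_of_pos hρ]; exact (sphere_subset_closedBall.trans hball).trans subset_closure
  have hw : b + ρ ∈ sphere b |ρ| := by simp
  have hwa : u (b + ρ) < u a := by
    by_contra! hcon
    have hre : (b + ρ).re ≤ b.re := hright ⟨hsphere hw, hcon⟩
    simp only [add_re, ofReal_re] at hre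
    linarith
  have havg := circleAverage_lt_of_continuousOn_of_le_of_exists_lt (hc.mono hsphere)
    (fun w hw ↦ hmax (hsphere hw)) ⟨_, hw, hwa⟩
  exact (hu.le_circleAverage hρ hball).not_gt (havg.trans_le hab)

theorem le_harmonic_of_frontier_le {h : ℂ → ℝ} (hu : SubharmonicOn u s) (hs : IsOpen s)
    (hb : Bornology.IsBounded s) (hc : ContinuousOn u (closure s)) (hh : HarmonicOnNhd h s)
    (hhc : ContinuousOn h (closure s)) (hle : ∀ z ∈ frontier s, u z ≤ h z) {z : ℂ}
    (hz : z ∈ closure s) : u z ≤ h z :=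
  sub_nonpos.1 <| (hu.sub_harmonicOnNhd (hc.mono subset_closure) hh).le_of_forall_frontier_le hs hb
    (hc.sub hhc) (fun w hw ↦ sub_nonpos.2 (hle w hw)) hz

end SubharmonicOn

section PolynomialApproximation

open Set Metric Submodule Polynomial ComplexConjugate

theorem exists_polynomial_add_conj_of_mem_span_fourier {T : ℝ} {f : C(AddCircle T, ℂ)}
    (hf : f ∈ span ℂ (range (fourier (T := T)))) :
    ∃ P Q : ℂ[X], ∀ x, f x = P.eval (x.toCircle : ℂ) + conj (Q.eval (x.toCircle : ℂ)) := by
  induction hf using span_induction with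
  | mem f hf =>
    obtain ⟨n, rfl⟩ := hf
    obtain ⟨m, rfl | rfl⟩ := n.eq_nat_or_neg
    · exact ⟨X ^ m, 0, fun x ↦ by
        rw [fourier_apply, AddCircle.toCircle_zsmul]; simp⟩
    · exact ⟨0, X ^ m, fun x ↦ by
        rw [fourier_apply, AddCircle.toCircle_zsmul]; simp [← Circle.coe_inv_eq_conj]⟩
  | zero => exact ⟨0, 0, by simp⟩
  | add f g _ _ hf hg =>
    obtain ⟨P, Q, hPQ⟩ := hf
    obtain ⟨P', Q', hPQ'⟩ := hg
    exact ⟨P + P', Q + Q', fun x ↦ by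
      simp only [ContinuousMap.add_apply, hPQ, hPQ', eval_add, map_add]; ring⟩
  | smul a f _ hf =>
    obtain ⟨P, Q, hPQ⟩ := hf
    exact ⟨C a * P, C (conj a) * Q, fun x ↦ by
      simp only [ContinuousMap.smul_apply, smul_eq_mul, hPQ, eval_mul, eval_C, map_mul, conj_conj]
      ring⟩

theorem exists_polynomial_abs_re_sub_lt {g : ℂ → ℝ} (hg : ContinuousOn g (sphere 0 1)) {ε : ℝ}
    (hε : 0 < ε) : ∃ P : ℂ[X], ∀ z ∈ sphere (0 : ℂ) 1, |(P.eval z).re - g z| < ε := by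
  have : Fact ((0 : ℝ) < 1) := ⟨one_pos⟩
  let G : C(AddCircle (1 : ℝ), ℂ) :=
    ⟨fun x ↦ g x.toCircle, continuous_ofReal.comp <| hg.comp_continuous
      (continuous_subtype_val.comp AddCircle.continuous_toCircle) fun x ↦ by simp [Circle.norm_coe]⟩
  have hG : G ∈ (span ℂ (range (fourier (T := (1 : ℝ))))).topologicalClosure := by
    rw [span_fourier_closure_eq_top]; trivial
  obtain ⟨f, hf, hfG⟩ := Metric.mem_closure_iff.1 hG ε hε
  obtain ⟨P, Q, hPQ⟩ := exists_polynomial_add_conj_of_mem_span_fourier hf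
  refine ⟨P + Q, fun z hz ↦ ?_⟩
  obtain ⟨x, hx⟩ := (AddCircle.homeomorphCircle (one_ne_zero (α := ℝ))).surjective
    ⟨z, by simpa [Submonoid.unitSphere] using hz⟩
  obtain rfl : (x.toCircle : ℂ) = z := by
    rw [← AddCircle.homeomorphCircle_apply one_ne_zero, hx]
  calc |((P + Q).eval (x.toCircle : ℂ)).re - g x.toCircle| = |(f x - G x).re| := by
        simp [hPQ, G]
    _ ≤ dist (f x) (G x) := by rw [Complex.dist_eq]; exact abs_re_le_norm _
    _ < ε := (ContinuousMap.dist_apply_le_dist x).trans_lt (by rwa [dist_comm])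

theorem SubharmonicOn.exists_polynomial_re_majorant {u : ℂ → ℝ} (hu : SubharmonicOn u (ball 0 1))
    (hc : ContinuousOn u (closedBall 0 1)) {ε : ℝ} (hε : 0 < ε) :
    ∃ P : ℂ[X], (∀ z ∈ closedBall (0 : ℂ) 1, u z ≤ (P.eval z).re) ∧
      ∀ z ∈ sphere (0 : ℂ) 1, (P.eval z).re < u z + ε := by
  obtain ⟨P, hP⟩ := exists_polynomial_abs_re_sub_lt (g := fun z ↦ u z + ε / 2)
    ((hc.mono sphere_subset_closedBall).add continuousOn_const) (half_pos hε)
  refine ⟨P, fun z hz ↦ ?_, fun z hz ↦ by linarith [(abs_lt.1 (hP z hz)).2]⟩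
  have hclosure : closure (ball (0 : ℂ) 1) = closedBall 0 1 := closure_ball 0 one_ne_zero
  refine hu.le_harmonic_of_frontier_le (h := fun z ↦ (P.eval z).re) isOpen_ball isBounded_ball
    (hclosure ▸ hc) (fun w _ ↦ (P.differentiable.analyticAt w).harmonicAt_re)
    (continuous_re.comp P.continuous).continuousOn (fun w hw ↦ ?_) (hclosure ▸ hz)
  rw [frontier_ball (0 : ℂ) one_ne_zero] at hw
  linarith [(abs_lt.1 (hP w hw)).1]

end PolynomialApproximation

section FejerRiesz

open Set Metric ComplexConjugate

theorem ofReal_mem_closedBall_zero_iff {x r : ℝ} :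
    (x : ℂ) ∈ closedBall (0 : ℂ) r ↔ x ∈ Icc (-r) r := by
  simp [abs_le]

theorem continuousOn_comp_ofReal {X : Type*} [TopologicalSpace X] {g : ℂ → X} {r : ℝ}
    (hg : ContinuousOn g (closedBall 0 r)) : ContinuousOn (fun x : ℝ ↦ g x) (Icc (-r) r) :=
  hg.comp continuous_ofReal.continuousOn fun _ hx ↦ ofReal_mem_closedBall_zero_iff.2 hx

section HalfDisk

variable {E : Type*} [NormedAddCommGroup E] [NormedSpace ℂ E] [CompleteSpace E] {f : ℂ → E}

theorem integral_diameter_add_integral_arc_eq_zero_of_differentiableOn {R : ℝ} (hR : 1 < R)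
    (hf : DifferentiableOn ℂ f (ball 0 R)) :
    (∫ x in (-1 : ℝ)..1, f x) + ∫ θ in (0 : ℝ)..π, (circleMap 0 1 θ * I) • f (circleMap 0 1 θ) =
      0 := by
  obtain ⟨F, hF⟩ := hf.isExactOn_ball
  have hline : ∀ x ∈ uIcc (-1 : ℝ) 1, (x : ℂ) ∈ ball (0 : ℂ) R := fun x hx ↦ by
    rw [uIcc_of_le (by norm_num)] at hx
    exact closedBall_subset_ball hR (ofReal_mem_closedBall_zero_iff.2 hx)
  have harc : ∀ θ, circleMap 0 1 θ ∈ ball (0 : ℂ) R := fun θ ↦ by simpa using hR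
  have hdiam : ∫ x in (-1 : ℝ)..1, f x = F 1 - F (-1) := by
    rw [intervalIntegral.integral_eq_sub_of_hasDerivAt (f := fun x : ℝ ↦ F x)
      (f' := fun x : ℝ ↦ f x)
      (fun x hx ↦ by
        simpa using! (hF x (hline x hx)).scomp x ofRealCLM.hasDerivAt)
      (hf.continuousOn.comp continuous_ofReal.continuousOn hline).intervalIntegrable]
    simp
  have hhalf : ∫ θ in (0 : ℝ)..π, (circleMap 0 1 θ * I) • f (circleMap 0 1 θ) =
      F (-1) - F 1 := by
    rw [intervalIntegral.integral_eq_sub_of_hasDerivAt (f := fun θ : ℝ ↦ F (circleMap 0 1 θ))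
      (fun θ _ ↦ (hF _ (harc θ)).scomp θ (hasDerivAt_circleMap 0 1 θ))
      (Continuous.intervalIntegrable (((continuous_circleMap 0 1).mul continuous_const).smul
        (hf.continuousOn.comp_continuous (continuous_circleMap 0 1) harc)) _ _)]
    simp [circleMap_zero]
  rw [hdiam, hhalf, sub_add_sub_cancel, sub_self]

theorem integral_diameter_add_integral_arc_eq_zero (hf : DiffContOnCl ℂ f (ball 0 1)) :
    (∫ x in (-1 : ℝ)..1, f x) + ∫ θ in (0 : ℝ)..π, (circleMap 0 1 θ * I) • f (circleMap 0 1 θ) =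
      0 := by
  have hscale {r : ℝ} (hr : r ∈ Icc (0 : ℝ) 1) {z : ℂ} (hz : z ∈ closedBall (0 : ℂ) 1) :
      (r : ℂ) * z ∈ closedBall (0 : ℂ) 1 := by
    simpa [abs_of_nonneg hr.1] using mul_le_one₀ hr.2 (norm_nonneg z) (by simpa using hz)
  have hcont {a b : ℝ} {γ : ℝ → ℂ} {k : ℝ → ℂ} (hγ : Continuous γ) (hk : Continuous k)
      (hmem : MapsTo γ (uIcc a b) (closedBall 0 1)) :
      ContinuousOn (fun r : ℝ ↦ ∫ t in a..b, k t • f (r * γ t)) (Icc 0 1) := by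
    refine continuousOn_intervalIntegral_of_continuousOn
      ((hk.comp continuous_snd).continuousOn.smul (hf.continuousOn_ball.comp ?_ ?_))
    · fun_prop
    · exact fun q hq ↦ hscale hq.1 (hmem hq.2)
  -- The dilates `f (r * ·)` with `r < 1` are holomorphic past the closed disk; then `r → 1`.
  let J : ℝ → E := fun r ↦ (∫ x in (-1 : ℝ)..1, (1 : ℂ) • f (r * x)) +
    ∫ θ in (0 : ℝ)..π, (circleMap 0 1 θ * I) • f (r * circleMap 0 1 θ)
  have hJ : EqOn J 0 (Ioo 0 1) := fun r hr ↦ by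
    have hdil : DifferentiableOn ℂ (fun z ↦ f (r * z)) (ball 0 r⁻¹) :=
      hf.differentiableOn.comp (by fun_prop) fun z hz ↦ by
        simpa [abs_of_pos hr.1, mul_inv_cancel₀ hr.1.ne'] using
          mul_lt_mul_of_pos_left (mem_ball_zero_iff.1 hz) hr.1
    simpa [J] using integral_diameter_add_integral_arc_eq_zero_of_differentiableOn
      ((one_lt_inv₀ hr.1).2 hr.2) hdil
  have hJc : ContinuousOn J (Icc 0 1) := by
    refine (hcont continuous_ofReal continuous_const fun x hx ↦ ?_).add
      (hcont (continuous_circleMap 0 1) ((continuous_circleMap 0 1).mul continuous_const)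
        fun θ _ ↦ circleMap_mem_closedBall 0 zero_le_one θ)
    rw [uIcc_of_le (by norm_num)] at hx
    exact ofReal_mem_closedBall_zero_iff.2 hx
  simpa [J] using hJ.of_subset_closure hJc continuousOn_const Ioo_subset_Icc_self
    (closure_Ioo zero_ne_one).ge (right_mem_Icc.2 zero_le_one)

end HalfDisk

theorem diffContOnCl_conj_conj {f : ℂ → ℂ} {s : Set ℂ} (hs : IsOpen s) (hf : DiffContOnCl ℂ f s) :
    DiffContOnCl ℂ (fun z ↦ conj (f (conj z))) (conj ⁻¹' s) := by
  refine ⟨fun z hz ↦ ?_, ?_⟩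
  · have hd := (hf.differentiableAt hs hz).conj_conj
    rw [conj_conj] at hd
    exact hd.differentiableWithinAt
  · exact continuous_conj.comp_continuousOn <|
      hf.continuousOn.comp continuous_conj.continuousOn fun z hz ↦
        continuous_conj.closure_preimage_subset s hz

theorem integral_zero_pi_add_comp_neg_eq_circleAverage {u : ℂ → ℝ} {c : ℂ} {R : ℝ}
    (hu : CircleIntegrable u c R) :
    ∫ θ in (0 : ℝ)..π, (u (circleMap c R θ) + u (circleMap c R (-θ))) =
      2 * π * circleAverage u c R := by
  have hper : Function.Periodic (fun θ ↦ u (circleMap c R θ)) (2 * π) :=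
    (periodic_circleMap c R).comp u
  have hint (a b : ℝ) : IntervalIntegrable (fun θ ↦ u (circleMap c R θ)) volume a b :=
    hper.intervalIntegrable₀ two_pi_pos.ne' hu a b
  have hneg : IntervalIntegrable (fun θ ↦ u (circleMap c R (-θ))) volume 0 π := by
    simpa using (hint 0 (-π)).comp_sub_left 0
  have hshift := hper.intervalIntegral_add_eq (-π) 0
  rw [show -π + 2 * π = π by ring, zero_add] at hshift
  rw [intervalIntegral.integral_add (hint 0 π) hneg,
    intervalIntegral.integral_comp_neg (fun θ ↦ u (circleMap c R θ)), neg_zero, add_comm,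
    intervalIntegral.integral_add_adjacent_intervals (hint _ _) (hint _ _), hshift,
    circleAverage_def, smul_eq_mul, mul_inv_cancel_left₀ two_pi_pos.ne']

variable {f : ℂ → ℂ}

theorem norm_integral_arc_mul_conj_conj_le_circleAverage (hf : ContinuousOn f (sphere 0 1)) :
    ‖∫ θ in (0 : ℝ)..π,
      (circleMap 0 1 θ * I) • (f (circleMap 0 1 θ) * conj (f (conj (circleMap 0 1 θ))))‖ ≤
      π * circleAverage (fun z ↦ ‖f z‖ ^ 2) 0 1 := by
  have hfθ : Continuous fun θ ↦ f (circleMap 0 1 θ) :=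
    continuous_comp_circleMap (by rwa [abs_one])
  have hfneg : Continuous fun θ ↦ f (circleMap 0 1 (-θ)) := hfθ.comp continuous_neg
  have hbound (θ : ℝ) :
      ‖(circleMap 0 1 θ * I) • (f (circleMap 0 1 θ) * conj (f (conj (circleMap 0 1 θ))))‖ ≤
        2⁻¹ * (‖f (circleMap 0 1 θ)‖ ^ 2 + ‖f (circleMap 0 1 (-θ))‖ ^ 2) := by
    simp only [conj_circleMap_zero, norm_smul, norm_mul, norm_circleMap_zero, abs_one, norm_I,
      one_mul, RCLike.norm_conj]
    linarith [two_mul_le_add_sq ‖f (circleMap 0 1 θ)‖ ‖f (circleMap 0 1 (-θ))‖]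
  calc _ ≤ ∫ θ in (0 : ℝ)..π, 2⁻¹ * (‖f (circleMap 0 1 θ)‖ ^ 2 + ‖f (circleMap 0 1 (-θ))‖ ^ 2) :=
        intervalIntegral.norm_integral_le_of_norm_le pi_pos.le
          (Filter.Eventually.of_forall fun θ _ ↦ hbound θ)
          ((((hfθ.norm.pow 2).add (hfneg.norm.pow 2)).const_mul _).intervalIntegrable _ _)
    _ = π * circleAverage (fun z ↦ ‖f z‖ ^ 2) 0 1 := by
        have hint : CircleIntegrable (fun z ↦ ‖f z‖ ^ 2) 0 1 :=
          (hf.norm.pow 2).circleIntegrable zero_le_one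
        rw [intervalIntegral.integral_const_mul,
          integral_zero_pi_add_comp_neg_eq_circleAverage hint]
        ring

theorem integral_diameter_norm_sq_le_circleAverage (hf : DiffContOnCl ℂ f (ball 0 1)) :
    ∫ x in (-1 : ℝ)..1, ‖f x‖ ^ 2 ≤ π * circleAverage (fun z ↦ ‖f z‖ ^ 2) 0 1 := by
  have hpre : conj ⁻¹' ball (0 : ℂ) 1 = ball 0 1 := by ext z; simp
  have hcauchy := integral_diameter_add_integral_arc_eq_zero
    (hf.smul (hpre ▸ diffContOnCl_conj_conj isOpen_ball hf))
  have hdiam : ∫ x in (-1 : ℝ)..1, f x • conj (f (conj (x : ℂ))) =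
      ((∫ x in (-1 : ℝ)..1, ‖f x‖ ^ 2 : ℝ) : ℂ) := by
    simp [← intervalIntegral.integral_ofReal, mul_conj']
  rw [hdiam] at hcauchy
  calc ∫ x in (-1 : ℝ)..1, ‖f x‖ ^ 2
      ≤ ‖((∫ x in (-1 : ℝ)..1, ‖f x‖ ^ 2 : ℝ) : ℂ)‖ := by
        rw [norm_real]; exact Real.le_norm_self _
    _ ≤ π * circleAverage (fun z ↦ ‖f z‖ ^ 2) 0 1 := by
        rw [eq_neg_of_add_eq_zero_left hcauchy, norm_neg]
        exact norm_integral_arc_mul_conj_conj_le_circleAverage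
          (hf.continuousOn_ball.mono sphere_subset_closedBall)

theorem circleAverage_norm_sq_eq {c : ℂ} {R : ℝ} (hf : DiffContOnCl ℂ f (ball c |R|)) :
    circleAverage (fun z ↦ ‖f z‖ ^ 2) c R =
      2 * circleAverage (fun z ↦ (f z).re ^ 2) c R - (f c ^ 2).re := by
  have hfc : ContinuousOn f (sphere c |R|) := hf.continuousOn_ball.mono sphere_subset_closedBall
  have hre : CircleIntegrable (fun z ↦ (2 : ℝ) • (f z).re ^ 2) c R :=
    (((continuous_re.comp_continuousOn hfc).pow 2).const_smul (2 : ℝ)).circleIntegrable'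
  have hsq : CircleIntegrable (fun z ↦ (f z ^ 2).re) c R :=
    (continuous_re.comp_continuousOn (hfc.pow 2)).circleIntegrable'
  have hmean : circleAverage (fun z ↦ (f z ^ 2).re) c R = (f c ^ 2).re := by
    have hd : DiffContOnCl ℂ (fun z ↦ f z ^ 2) (ball c |R|) := by
      simpa only [sq, smul_eq_mul] using hf.smul hf
    rw [← hd.circleAverage]
    exact reCLM.circleAverage_comp_comm (hfc.pow 2).circleIntegrable'
  have hsplit (z : ℂ) : ‖f z‖ ^ 2 = (2 : ℝ) • (f z).re ^ 2 - (f z ^ 2).re := by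
    rw [← normSq_eq_norm_sq, normSq_apply, sq (f z), mul_re, smul_eq_mul]
    ring
  simp_rw [hsplit]
  rw [circleAverage_fun_sub hre hsq, circleAverage_fun_smul, hmean, smul_eq_mul]

theorem integral_diameter_re_sq_le_circleAverage (hf : DiffContOnCl ℂ f (ball 0 1)) :
    ∫ x in (-1 : ℝ)..1, (f x).re ^ 2 ≤ 2 * π * circleAverage (fun z ↦ (f z).re ^ 2) 0 1 := by
  let g : ℂ → ℂ := fun z ↦ f z - (f 0).im * I
  have hg : DiffContOnCl ℂ g (ball 0 1) := hf.sub_const _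
  have hre (z : ℂ) : (g z).re = (f z).re := by simp [g]
  have hg0 : 0 ≤ (g 0 ^ 2).re := by simp [g, sq, mul_self_nonneg]
  have hgx : ContinuousOn (fun x : ℝ ↦ g x) (Icc (-1) 1) :=
    continuousOn_comp_ofReal hg.continuousOn_ball
  simp only [← hre]
  calc ∫ x in (-1 : ℝ)..1, (g x).re ^ 2 ≤ ∫ x in (-1 : ℝ)..1, ‖g x‖ ^ 2 := by
        refine intervalIntegral.integral_mono_on (by norm_num)
          (((continuous_re.comp_continuousOn hgx).pow 2).intervalIntegrable_of_Icc (by norm_num))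
          ((hgx.norm.pow 2).intervalIntegrable_of_Icc (by norm_num)) fun x _ ↦ ?_
        exact sq_le_sq.2 (by simpa using abs_re_le_norm (g x))
    _ ≤ π * circleAverage (fun z ↦ ‖g z‖ ^ 2) 0 1 := integral_diameter_norm_sq_le_circleAverage hg
    _ = π * (2 * circleAverage (fun z ↦ (g z).re ^ 2) 0 1 - (g 0 ^ 2).re) := by
        rw [circleAverage_norm_sq_eq (by rwa [abs_one])]
    _ ≤ 2 * π * circleAverage (fun z ↦ (g z).re ^ 2) 0 1 := by
        linarith [mul_nonneg pi_pos.le hg0]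

namespace SubharmonicOn

variable {u : ℂ → ℝ}

theorem integral_diameter_sq_le_circleAverage_add_sq (hu : SubharmonicOn u (ball 0 1))
    (hc : ContinuousOn u (closedBall 0 1)) (h0 : ∀ z ∈ closedBall (0 : ℂ) 1, 0 ≤ u z)
    {ε : ℝ} (hε : 0 < ε) :
    ∫ x in (-1 : ℝ)..1, u x ^ 2 ≤ 2 * π * circleAverage (fun z ↦ (u z + ε) ^ 2) 0 1 := by
  obtain ⟨P, hP, hPε⟩ := hu.exists_polynomial_re_majorant hc hε
  have hre : Continuous fun z ↦ (P.eval z).re := continuous_re.comp P.continuous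
  calc ∫ x in (-1 : ℝ)..1, u x ^ 2 ≤ ∫ x in (-1 : ℝ)..1, (P.eval (x : ℂ)).re ^ 2 := by
        refine intervalIntegral.integral_mono_on (by norm_num)
          (((continuousOn_comp_ofReal hc).pow 2).intervalIntegrable_of_Icc (by norm_num))
          (((hre.comp continuous_ofReal).pow 2).intervalIntegrable _ _) fun x hx ↦ ?_
        have hx' := ofReal_mem_closedBall_zero_iff.2 hx
        exact pow_le_pow_left₀ (h0 x hx') (hP x hx') 2
    _ ≤ 2 * π * circleAverage (fun z ↦ (P.eval z).re ^ 2) 0 1 :=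
        integral_diameter_re_sq_le_circleAverage P.differentiable.diffContOnCl
    _ ≤ 2 * π * circleAverage (fun z ↦ (u z + ε) ^ 2) 0 1 := by
        refine mul_le_mul_of_nonneg_left (circleAverage_mono
          ((hre.pow 2).continuousOn.circleIntegrable zero_le_one)
          ((((hc.mono sphere_subset_closedBall).add continuousOn_const).pow 2).circleIntegrable
            zero_le_one) fun z hz ↦ ?_) two_pi_pos.le
        rw [abs_one] at hz
        have hz' := sphere_subset_closedBall hz
        exact pow_le_pow_left₀ ((h0 z hz').trans (hP z hz')) (hPε z hz).le 2

theorem integral_diameter_sq_le_circleAverage (hu : SubharmonicOn u (ball 0 1))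
    (hc : ContinuousOn u (closedBall 0 1)) (h0 : ∀ z ∈ closedBall (0 : ℂ) 1, 0 ≤ u z) :
    ∫ x in (-1 : ℝ)..1, u x ^ 2 ≤ 2 * π * circleAverage (fun z ↦ u z ^ 2) 0 1 := by
  have huθ : Continuous fun θ ↦ u (circleMap 0 1 θ) :=
    continuous_comp_circleMap (by rw [abs_one]; exact hc.mono sphere_subset_closedBall)
  have hsum : Continuous fun q : ℝ × ℝ ↦ (u (circleMap 0 1 q.2) + q.1) ^ 2 :=
    ((huθ.comp continuous_snd).add continuous_fst).pow 2
  have hcont : Continuous fun ε : ℝ ↦ 2 * π * circleAverage (fun z ↦ (u z + ε) ^ 2) 0 1 := by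
    simp only [circleAverage_def, smul_eq_mul]
    exact continuous_const.mul (continuous_const.mul
      (intervalIntegral.continuous_parametric_intervalIntegral_of_continuous' hsum 0 (2 * π)))
  have hlim : Filter.Tendsto (fun ε : ℝ ↦ 2 * π * circleAverage (fun z ↦ (u z + ε) ^ 2) 0 1)
      (nhdsWithin 0 (Ioi 0)) (nhds (2 * π * circleAverage (fun z ↦ u z ^ 2) 0 1)) :=
    (hcont.tendsto' 0 _ (by simp only [add_zero])).mono_left nhdsWithin_le_nhds
  exact ge_of_tendsto hlim (Filter.eventually_of_mem self_mem_nhdsWithin fun _ hε ↦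
    hu.integral_diameter_sq_le_circleAverage_add_sq hc h0 hε)

end SubharmonicOn

end FejerRiesz

/-- **Frazer's theorem, `n = 1`.** If `U` is non-negative and continuous on the closed unit
disk, subharmonic on the open unit disk, and `p ≥ 2`, then
`∫_{-1}^{1} U(x)^p dx ≤ ∫₀^{2π} U(e^{iθ})^p dθ`. -/
theorem frazer_diameter (p : ℝ) (hp : 2 ≤ p) (U : ℂ → ℝ)
    (hUsub : SubharmonicOn U (Metric.ball 0 1))
    (hUnonneg : ∀ z ∈ Metric.closedBall (0:ℂ) 1, 0 ≤ U z)
    (hUcont : ContinuousOn U (Metric.closedBall 0 1)) :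
    (∫ x in (-1:ℝ)..1, U (x : ℂ) ^ p) ≤
      ∫ θ in (0:ℝ)..(2 * π), U (Complex.exp (θ * Complex.I)) ^ p := by
  have hsq : ∀ z ∈ Metric.closedBall (0 : ℂ) 1, (U z ^ (p / 2)) ^ 2 = U z ^ p := fun z hz ↦ by
    rw [← rpow_mul_natCast (hUnonneg z hz), Nat.cast_ofNat, div_mul_cancel₀ p two_ne_zero]
  have hsub : SubharmonicOn (fun z ↦ U z ^ (p / 2)) (Metric.ball 0 1) :=
    hUsub.rpow (hUcont.mono Metric.ball_subset_closedBall)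
      (fun z hz ↦ hUnonneg z (Metric.ball_subset_closedBall hz)) (by linarith)
  have hcont : ContinuousOn (fun z ↦ U z ^ (p / 2)) (Metric.closedBall 0 1) :=
    hUcont.rpow_const fun _ _ ↦ Or.inr (by linarith)
  calc ∫ x in (-1:ℝ)..1, U x ^ p = ∫ x in (-1:ℝ)..1, (U x ^ (p / 2)) ^ 2 := by
        refine intervalIntegral.integral_congr fun x hx ↦ (hsq x ?_).symm
        rw [Set.uIcc_of_le (by norm_num)] at hx
        exact ofReal_mem_closedBall_zero_iff.2 hx
    _ ≤ 2 * π * circleAverage (fun z ↦ (U z ^ (p / 2)) ^ 2) 0 1 :=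
        hsub.integral_diameter_sq_le_circleAverage hcont fun z hz ↦ rpow_nonneg (hUnonneg z hz) _
    _ = 2 * π * circleAverage (fun z ↦ U z ^ p) 0 1 := by
        rw [circleAverage_congr_sphere fun z hz ↦ hsq z
          (Metric.sphere_subset_closedBall (by rwa [abs_one] at hz))]
    _ = ∫ θ in (0:ℝ)..(2 * π), U (Complex.exp (θ * Complex.I)) ^ p := by
        rw [circleAverage_def, smul_eq_mul, mul_inv_cancel_left₀ two_pi_pos.ne']
        simp only [circleMap_zero, ofReal_one, one_mul]
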